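/- Let π < φ < 2π with φ ≠ 3π/2, l > 0, r > 0 with l·|sin φ| ≤ r. Set γ = l·sin(2π−φ)/r = −l·sin φ/r and ζ₁ = φ − π + arcsin(l·sin φ/r), and define g₁(φ) = −2 + 2(φ−π)/tan φ, g_{3,1} = −2γ² + (1/tan φ)·(2·arcsin γ − 2γ·√(1−γ²)), g_{3,3} = (l²·sin φ/2)·(ζ₁·cos φ − sin φ·(log|sin φ| − log γ)), and g₄ = l·r·(1 − cos ζ₁) − (r²/8)·g_{3,1} + g_{3,3}. Then −g₄ − (r²/8)·g₁(φ) = −l·r + r²/4 − (3l/4)·√(r² − (l·sin φ)²)·cos φ + (3/4)·(l·sin φ)² − r²·ζ₁/(4·tan φ) − (l²·ζ₁/2)·sin φ·cos φ + (log(r/l))·(l·sin φ)²/2. -/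

import Mathlib

open Real

/-!
Write `A = arcsin (l sin φ / r)` and `S = √(r² - (l sin φ)²)`. Since `sin φ < 0`, we have
`arcsin γ = -A`, `√(1 - γ²) = S / r` and `log |sin φ| - log γ = log (r / l)`, while the addition
formula gives `r cos ζ₁ = l sin² φ - S cos φ`. After these substitutions the identity is linear in
`A`, `S` and `log (r / l)`, and the remaining quotient is removed by `sin φ * cot φ = cos φ`.
-/

lemma sin_neg_of_pi_lt_of_lt_two_pi {x : ℝ} (hπ : π < x) (h2π : x < 2 * π) : sin x < 0 := by
  rw [← sin_sub_two_pi]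
  exact sin_neg_of_neg_of_neg_pi_lt (by linarith) (by linarith)

lemma cos_add_arcsin (θ : ℝ) {x : ℝ} (hx : |x| ≤ 1) :
    cos (θ + arcsin x) = cos θ * √(1 - x ^ 2) - sin θ * x := by
  obtain ⟨hx₁, hx₂⟩ := abs_le.mp hx
  rw [cos_add, cos_arcsin, sin_arcsin hx₁ hx₂]

lemma sqrt_one_sub_div_sq (a : ℝ) {r : ℝ} (hr : 0 < r) :
    √(1 - (a / r) ^ 2) = √(r ^ 2 - a ^ 2) / r := by
  rw [div_pow, one_sub_div (pow_ne_zero 2 hr.ne'), sqrt_div' _ (sq_nonneg r), sqrt_sq hr.le]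

namespace ConcaveVertex

/-- The paper's `γ = l sin (2π - φ) / r`: the distance from an endpoint of one edge to the line
carrying the other edge, relative to the sensing range. -/
noncomputable def γ (φ l r : ℝ) : ℝ := -l * sin φ / r

/-- The paper's angle `ζ₁`, equal to `φ - π - arcsin γ`. -/
noncomputable def ζ₁ (φ l r : ℝ) : ℝ := φ - π + arcsin (l * sin φ / r)

/-- The paper's small-range correction `g₁`, with `cot φ` for `1 / tan φ` so that no junk value of
the quotient enters at `φ = 3π/2`. -/
noncomputable def g₁ (φ : ℝ) : ℝ := -2 + 2 * (φ - π) * cot φ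

/-- The term `g_{3,1}` of the overlap measure, with `cot φ` for `1 / tan φ`. -/
noncomputable def g₃₁ (φ l r : ℝ) : ℝ :=
  -2 * γ φ l r ^ 2 + cot φ * (2 * arcsin (γ φ l r) - 2 * γ φ l r * √(1 - γ φ l r ^ 2))

/-- The term `g_{3,3}` of the overlap measure. -/
noncomputable def g₃₃ (φ l r : ℝ) : ℝ :=
  l ^ 2 * sin φ / 2 * (ζ₁ φ l r * cos φ - sin φ * (log |sin φ| - log (γ φ l r)))

/-- The measure `g₄` of the overlap between the target object and the sensing parallelogram at a
concave vertex of interior angle `φ`, with adjacent edge length `l` and sensing range `r`. -/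
noncomputable def g₄ (φ l r : ℝ) : ℝ :=
  l * r * (1 - cos (ζ₁ φ l r)) - r ^ 2 / 8 * g₃₁ φ l r + g₃₃ φ l r

/-- The function `Φ` used in the paper to prove that the parameters `(φ, l)` are unique, with
`cot φ` for `1 / tan φ`. -/
noncomputable def Phi (φ l r : ℝ) : ℝ :=
  -(l * r) + r ^ 2 / 4 - 3 * l / 4 * √(r ^ 2 - (l * sin φ) ^ 2) * cos φ
    + 3 / 4 * (l * sin φ) ^ 2 - r ^ 2 * ζ₁ φ l r / 4 * cot φ
    - l ^ 2 * ζ₁ φ l r / 2 * sin φ * cos φ + log (r / l) * (l * sin φ) ^ 2 / 2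

variable {φ l r : ℝ}

lemma γ_eq_neg_div : γ φ l r = -(l * sin φ / r) := by
  rw [γ, neg_mul, neg_div]

lemma mul_cos_ζ₁ (hr : 0 < r) (hφ : |l * sin φ| ≤ r) :
    r * cos (ζ₁ φ l r) = l * sin φ ^ 2 - √(r ^ 2 - (l * sin φ) ^ 2) * cos φ := by
  have hratio : |l * sin φ / r| ≤ 1 := by
    rwa [abs_div, abs_of_pos hr, div_le_one hr]
  rw [ζ₁, cos_add_arcsin _ hratio, sqrt_one_sub_div_sq _ hr, cos_sub_pi, sin_sub_pi]
  field_simp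
  ring

lemma sq_mul_g₃₁ (hr : 0 < r) (hφ : sin φ ≠ 0) :
    r ^ 2 * g₃₁ φ l r = -2 * (l * sin φ) ^ 2 - 2 * r ^ 2 * cot φ * arcsin (l * sin φ / r)
      + 2 * l * √(r ^ 2 - (l * sin φ) ^ 2) * cos φ := by
  rw [g₃₁, γ_eq_neg_div, arcsin_neg, neg_sq, sqrt_one_sub_div_sq _ hr, cot_eq_cos_div_sin]
  field_simp
  ring

lemma log_abs_sin_sub_log_γ (hl : l ≠ 0) (hr : r ≠ 0) (hφ : sin φ ≠ 0) :
    log |sin φ| - log (γ φ l r) = log (r / l) := by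
  rw [γ_eq_neg_div, log_neg_eq_log, log_abs, log_div (mul_ne_zero hl hφ) hr, log_mul hl hφ,
    log_div hr hl]
  ring

end ConcaveVertex

open ConcaveVertex in
theorem Phi_eq_general {φ l r : ℝ} (hφ : sin φ < 0) (hl : 0 < l) (hr : 0 < r)
    (hlr : l * |sin φ| ≤ r) : -g₄ φ l r - r ^ 2 / 8 * g₁ φ = Phi φ l r := by
  have hcos := mul_cos_ζ₁ hr (by rwa [abs_mul, abs_of_pos hl])
  have hg₃₁ := sq_mul_g₃₁ (l := l) hr hφ.ne
  have hζ₁ : ζ₁ φ l r = φ - π + arcsin (l * sin φ / r) := rfl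
  rw [g₄, g₁, g₃₃, Phi, log_abs_sin_sub_log_γ hl.ne' hr.ne' hφ.ne]
  linear_combination l * hcos + hg₃₁ / 8 + r ^ 2 / 4 * cot φ * hζ₁

/-- With `γ = −l·sin φ/r`, `ζ₁ = φ − π + arcsin(l·sin φ/r)`,
`g₁ = −2 + 2(φ−π)/tan φ`,
`g31 = −2γ² + (1/tan φ)(2 arcsin γ − 2γ√(1−γ²))`,
`g33 = (l² sin φ/2)(ζ₁ cos φ − sin φ (log|sin φ| − log γ))`, and
`g₄ = l r (1 − cos ζ₁) − (r²/8) g31 + g33`, the observable combination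
`−g₄ − (r²/8) g₁` equals
`−l r + r²/4 − (3l/4)√(r² − (l sin φ)²) cos φ + (3/4)(l sin φ)² − r² ζ₁/(4 tan φ)
 − (l² ζ₁/2) sin φ cos φ + log(r/l)·(l sin φ)²/2`. -/
theorem Phi_eq (φ l r : ℝ) (h1 : π < φ) (h2 : φ < 2 * π) (h3 : φ ≠ 3 * π / 2)
    (hl : 0 < l) (hr : 0 < r) (hlr : l * |Real.sin φ| ≤ r)
    (γ ζ₁ g₁ g31 g33 g₄ : ℝ)
    (hγ : γ = -l * Real.sin φ / r)
    (hζ₁ : ζ₁ = φ - π + Real.arcsin (l * Real.sin φ / r))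
    (hg₁ : g₁ = -2 + 2 * (φ - π) / Real.tan φ)
    (hg31 : g31 = -2 * γ ^ 2 +
      (1 / Real.tan φ) * (2 * Real.arcsin γ - 2 * γ * Real.sqrt (1 - γ ^ 2)))
    (hg33 : g33 = (l ^ 2 * Real.sin φ / 2) *
      (ζ₁ * Real.cos φ - Real.sin φ * (Real.log |Real.sin φ| - Real.log γ)))
    (hg₄ : g₄ = l * r * (1 - Real.cos ζ₁) - (r ^ 2 / 8) * g31 + g33) :
    -g₄ - (r ^ 2 / 8) * g₁
      = -(l * r) + r ^ 2 / 4
        - (3 * l / 4) * Real.sqrt (r ^ 2 - (l * Real.sin φ) ^ 2) * Real.cos φ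
        + (3 / 4) * (l * Real.sin φ) ^ 2
        - r ^ 2 * ζ₁ / (4 * Real.tan φ)
        - (l ^ 2 * ζ₁ / 2) * Real.sin φ * Real.cos φ
        + Real.log (r / l) * (l * Real.sin φ) ^ 2 / 2 := by
  subst hg₄ hg33 hg31 hg₁ hζ₁ hγ
  simpa only [ConcaveVertex.g₄, ConcaveVertex.g₁, ConcaveVertex.g₃₁, ConcaveVertex.g₃₃,
    ConcaveVertex.Phi, ConcaveVertex.ζ₁, ConcaveVertex.γ, div_eq_mul_inv, mul_inv, one_mul,
    mul_assoc, tan_inv_eq_cot]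
    using Phi_eq_general (sin_neg_of_pi_lt_of_lt_two_pi h1 h2) hl hr hlr
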